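/- Let n ≥ 2, k ≥ 1, and let I^{(1)} ⊇ m^k ⊇ I^{(2)} be homogeneous m-primary ideals of R contained in m. Assume that T^{=d}(I^{(1)}, I^{(2)}) = 0 for every d ≤ −2 (i.e. the negative tangents of the pair are concentrated in degree −1). Then: (i) for every d ≥ 0 the forgetful map (φ_1, φ_k, φ_2) ↦ (φ_1, φ_2) restricts to a ℂ-linear isomorphism T^{=d}(I^{(1)}, m^k, I^{(2)}) ≅ T^{=d}(I^{(1)}, I^{(2)}); (ii) T^{=d}(I^{(1)}, m^k, I^{(2)}) = 0 for every d ≤ −2; (iii) there is a ℂ-linear isomorphism T^{=−1}(I^{(1)}, m^k, I^{(2)}) ≅ T^{=−1}(I^{(1)}, I^{(2)}) ⊕ Hom_ℂ(R_k/(I^{(2)} ∩ R_k), I^{(1)} ∩ R_{k−1}). -/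

import Mathlib

open MvPolynomial

noncomputable section
set_option synthInstance.maxHeartbeats 1000000
set_option maxHeartbeats 1000000

/-- `R n = ℂ[x_1, …, x_n]`. -/
abbrev R (n : ℕ) : Type := MvPolynomial (Fin n) ℂ

/-- `m = (x_1, …, x_n)`, the ideal generated by the variables. -/
def mId (n : ℕ) : Ideal (R n) := Ideal.span (Set.range MvPolynomial.X)

/-- `R_d`, the ℂ-subspace of homogeneous polynomials of degree `d`. -/
def Rdeg (n d : ℕ) : Submodule ℂ (R n) := homogeneousSubmodule (Fin n) ℂ d

open Classical in
/-- The canonical projection `R/p → R/q` (for `p ≤ q`); defined as `0` if `p ≰ q`. -/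
def proj {n : ℕ} (p q : Ideal (R n)) : (R n ⧸ p) →ₗ[R n] (R n ⧸ q) :=
  if h : p ≤ q then Submodule.mapQ p q LinearMap.id (fun _ hx => h hx) else 0

/-- Candidate tangent tuples for a pair of ideals. -/
abbrev TanCar2 (n : ℕ) (I1 I2 : Ideal (R n)) : Type :=
  (↥I1 →ₗ[R n] (R n ⧸ I1)) × (↥I2 →ₗ[R n] (R n ⧸ I2))

/-- Candidate tangent tuples for a triple of ideals. -/
abbrev TanCar3 (n : ℕ) (I1 K I2 : Ideal (R n)) : Type :=
  (↥I1 →ₗ[R n] (R n ⧸ I1)) × (↥K →ₗ[R n] (R n ⧸ K)) × (↥I2 →ₗ[R n] (R n ⧸ I2))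

/-- The tangent space `T(I^{(1)}, I^{(2)})` of a pair. -/
def pairT {n : ℕ} (I1 I2 : Ideal (R n)) : Submodule ℂ (TanCar2 n I1 I2) where
  carrier := { φ | ∀ (f : R n) (hf1 : f ∈ I1) (hf2 : f ∈ I2),
      φ.1 ⟨f, hf1⟩ = proj I2 I1 (φ.2 ⟨f, hf2⟩) }
  add_mem' := by
    intro a b ha hb f hf1 hf2
    simp only [Prod.fst_add, Prod.snd_add, LinearMap.add_apply, map_add,
      ha f hf1 hf2, hb f hf1 hf2]
  zero_mem' := by intro f hf1 hf2; simp
  smul_mem' := by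
    intro c a ha f hf1 hf2
    simp only [Prod.smul_fst, Prod.smul_snd, LinearMap.smul_apply,
      LinearMap.map_smul_of_tower, ha f hf1 hf2]

/-- The tangent space `T(I^{(1)}, K, I^{(2)})` of a triple. -/
def tripleT {n : ℕ} (I1 K I2 : Ideal (R n)) : Submodule ℂ (TanCar3 n I1 K I2) where
  carrier := { φ |
      (∀ (f : R n) (hf1 : f ∈ I1) (hfK : f ∈ K),
        φ.1 ⟨f, hf1⟩ = proj K I1 (φ.2.1 ⟨f, hfK⟩)) ∧
      (∀ (f : R n) (hfK : f ∈ K) (hf2 : f ∈ I2),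
        φ.2.1 ⟨f, hfK⟩ = proj I2 K (φ.2.2 ⟨f, hf2⟩)) }
  add_mem' := by
    intro a b ha hb
    refine ⟨fun f hf1 hfK => ?_, fun f hfK hf2 => ?_⟩
    · simp only [Prod.fst_add, Prod.snd_add, LinearMap.add_apply, map_add,
        ha.1 f hf1 hfK, hb.1 f hf1 hfK]
    · simp only [Prod.fst_add, Prod.snd_add, LinearMap.add_apply, map_add,
        ha.2 f hfK hf2, hb.2 f hfK hf2]
  zero_mem' := by
    refine ⟨fun f hf1 hfK => ?_, fun f hfK hf2 => ?_⟩ <;> simp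
  smul_mem' := by
    intro c a ha
    refine ⟨fun f hf1 hfK => ?_, fun f hfK hf2 => ?_⟩
    · simp only [Prod.smul_fst, Prod.smul_snd, LinearMap.smul_apply,
        LinearMap.map_smul_of_tower, ha.1 f hf1 hfK]
    · simp only [Prod.smul_fst, Prod.smul_snd, LinearMap.smul_apply,
        LinearMap.map_smul_of_tower, ha.2 f hfK hf2]

open Classical in
/-- The image of `R_{e+d}` in `R/I` (interpreted as `0` when `e + d < 0`). -/
def gradedImage {n : ℕ} (I : Ideal (R n)) (e : ℕ) (d : ℤ) : Submodule ℂ (R n ⧸ I) :=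
  if h : 0 ≤ (e : ℤ) + d then
    Submodule.map (Ideal.Quotient.mkₐ ℂ I).toLinearMap (Rdeg n ((e : ℤ) + d).toNat)
  else ⊥

/-- The property that a tangent vector `φ ∈ Hom_R(I, R/I)` is homogeneous of degree `d`:
for every `e ≥ 0` and every homogeneous `f ∈ I ∩ R_e`, `φ(f)` lies in the image of
`R_{e+d}` in `R/I`. -/
def gradedHom {n : ℕ} (I : Ideal (R n)) (d : ℤ) (φ : ↥I →ₗ[R n] (R n ⧸ I)) : Prop :=
  ∀ (e : ℕ) (f : R n) (hf : f ∈ I), f ∈ Rdeg n e → φ ⟨f, hf⟩ ∈ gradedImage I e d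

/-- The degree-`d` part `T^{=d}(I^{(1)}, I^{(2)})` of the tangent space of a pair of
homogeneous ideals. -/
def pairTgr {n : ℕ} (I1 I2 : Ideal (R n)) (d : ℤ) : Submodule ℂ (TanCar2 n I1 I2) :=
  pairT I1 I2 ⊓
    { carrier := { φ | gradedHom I1 d φ.1 ∧ gradedHom I2 d φ.2 }
      add_mem' := by
        intro a b ha hb
        refine ⟨fun e f hf hfe => ?_, fun e f hf hfe => ?_⟩
        · exact Submodule.add_mem _ (ha.1 e f hf hfe) (hb.1 e f hf hfe)
        · exact Submodule.add_mem _ (ha.2 e f hf hfe) (hb.2 e f hf hfe)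
      zero_mem' := by
        refine ⟨fun e f hf hfe => ?_, fun e f hf hfe => ?_⟩ <;>
          exact Submodule.zero_mem _
      smul_mem' := by
        intro c a ha
        refine ⟨fun e f hf hfe => ?_, fun e f hf hfe => ?_⟩
        · exact Submodule.smul_mem _ c (ha.1 e f hf hfe)
        · exact Submodule.smul_mem _ c (ha.2 e f hf hfe) }

/-- The degree-`d` part `T^{=d}(I^{(1)}, K, I^{(2)})` of the tangent space of a triple of
homogeneous ideals. -/
def tripleTgr {n : ℕ} (I1 K I2 : Ideal (R n)) (d : ℤ) : Submodule ℂ (TanCar3 n I1 K I2) :=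
  tripleT I1 K I2 ⊓
    { carrier := { φ | gradedHom I1 d φ.1 ∧ gradedHom K d φ.2.1 ∧ gradedHom I2 d φ.2.2 }
      add_mem' := by
        intro a b ha hb
        refine ⟨fun e f hf hfe => ?_, fun e f hf hfe => ?_, fun e f hf hfe => ?_⟩
        · exact Submodule.add_mem _ (ha.1 e f hf hfe) (hb.1 e f hf hfe)
        · exact Submodule.add_mem _ (ha.2.1 e f hf hfe) (hb.2.1 e f hf hfe)
        · exact Submodule.add_mem _ (ha.2.2 e f hf hfe) (hb.2.2 e f hf hfe)
      zero_mem' := by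
        refine ⟨fun e f hf hfe => ?_, fun e f hf hfe => ?_, fun e f hf hfe => ?_⟩ <;>
          exact Submodule.zero_mem _
      smul_mem' := by
        intro c a ha
        refine ⟨fun e f hf hfe => ?_, fun e f hf hfe => ?_, fun e f hf hfe => ?_⟩
        · exact Submodule.smul_mem _ c (ha.1 e f hf hfe)
        · exact Submodule.smul_mem _ c (ha.2.1 e f hf hfe)
        · exact Submodule.smul_mem _ c (ha.2.2 e f hf hfe) }

/-!
The middle component `φ_k` of a tangent vector lives in `Hom_R(m^k, R/m^k)`, and for `n ≥ 2` this
graded module is concentrated in degree `-1`. In degree `d ≥ 0` the generators `R_k` of `m^k` are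
sent into `R_{k+d} ⊆ m^k`. In degree `d ≤ -2` the relations `x_i · (x_j g) = x_j · (x_i g)`, with
`g` a monomial of degree `k - 1`, lie in degree `k + d + 1 < k`, so they hold in `R` and not only
modulo `m^k`. Chaining them gives `x^b q_a = x^a q_b` for the images `q_a` of the monomials `x^a` of
degree `k`; hence `x_0^k` divides `q_{(k, 0, …, 0)}`, which has degree less than `k` and so
vanishes, and with it every `q_a`.

In degree `-1` the same homomorphisms are the arbitrary linear maps `ψ : R_k → R_{k-1}`, because `m`
kills the values in `R/m^k`. Such a `ψ` is compatible with a given pair `(φ_1, φ_2)` when it lifts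
`φ_1` on `R_k` and `φ_2` on `I^{(2)} ∩ R_k`. On `I^{(2)} ∩ R_k` a lift of `φ_2` also lifts `φ_1`,
so it differs from a lift of `φ_1` on `R_k` by a map into `I^{(1)} ∩ R_{k-1}`; extending this map
linearly to `R_k` yields a compatible `ψ`. The solutions for the zero pair are the maps
`R_k → I^{(1)} ∩ R_{k-1}` vanishing on `I^{(2)} ∩ R_k`.
-/

section Polynomial

variable {σ A : Type*}

section CommSemiring

variable [CommSemiring A] {e k : ℕ} {f : MvPolynomial σ A}

theorem mem_pow_idealOfVars_of_isHomogeneous (hf : f.IsHomogeneous e) (hke : k ≤ e) :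
    f ∈ idealOfVars σ A ^ k :=
  (mem_pow_idealOfVars_iff' k f).2 fun _ hx => hf.coeff_eq_zero (by omega)

theorem homogeneousComponent_eq_zero_of_mem_pow_idealOfVars (hf : f ∈ idealOfVars σ A ^ k)
    (hek : e < k) : homogeneousComponent e f = 0 := by
  ext x
  rw [coeff_homogeneousComponent, coeff_zero]
  split_ifs with hx
  · exact (mem_pow_idealOfVars_iff' k f).1 hf x (hx ▸ hek)
  · rfl

theorem eq_zero_of_isHomogeneous_of_mem_pow_idealOfVars (hf : f.IsHomogeneous e)
    (hfk : f ∈ idealOfVars σ A ^ k) (hek : e < k) : f = 0 := by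
  rw [← homogeneousComponent_eq_self hf]
  exact homogeneousComponent_eq_zero_of_mem_pow_idealOfVars hfk hek

variable {M : Type*} [AddCommMonoid M] [Module (MvPolynomial σ A) M]

theorem linearMap_ext_of_isHomogeneous {J : Ideal (MvPolynomial σ A)}
    (hJ : ∀ f ∈ J, ∀ e, homogeneousComponent e f ∈ J) {φ ψ : J →ₗ[MvPolynomial σ A] M}
    (h : ∀ e f (hf : f ∈ J), f.IsHomogeneous e → φ ⟨f, hf⟩ = ψ ⟨f, hf⟩) : φ = ψ := by
  ext ⟨f, hf⟩
  have hsum : (⟨f, hf⟩ : J) =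
      ∑ e ∈ Finset.range (f.totalDegree + 1), ⟨homogeneousComponent e f, hJ f hf e⟩ :=
    Subtype.ext (by simpa using (sum_homogeneousComponent f).symm)
  rw [hsum, map_sum, map_sum]
  exact Finset.sum_congr rfl fun e _ => h e _ _ (homogeneousComponent_isHomogeneous e f)

theorem linearMap_ext_pow_idealOfVars {φ ψ : ↥(idealOfVars σ A ^ k) →ₗ[MvPolynomial σ A] M}
    (h : ∀ a : σ →₀ ℕ, ∀ ha : a.degree = k,
      φ ⟨monomial a 1, mem_pow_idealOfVars_of_isHomogeneous (isHomogeneous_monomial 1 ha) le_rfl⟩ =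
      ψ ⟨monomial a 1,
        mem_pow_idealOfVars_of_isHomogeneous (isHomogeneous_monomial 1 ha) le_rfl⟩) :
    φ = ψ := by
  rw [Submodule.linearMap_eq_iff_of_eq_span φ ψ (pow_idealOfVars_eq_span k)]
  rintro ⟨_, a, ha, rfl⟩
  exact h a ha

end CommSemiring

section CommRing

variable [CommRing A] {k : ℕ}

theorem sub_C_coeff_zero_mem_idealOfVars (r : MvPolynomial σ A) :
    r - C (r.coeff 0) ∈ idealOfVars σ A := by
  rw [← pow_one (idealOfVars σ A), mem_pow_idealOfVars_iff']
  intro x hx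
  obtain rfl : x = 0 := (Finsupp.degree_eq_zero_iff x).1 (by omega)
  simp

theorem mul_sub_coeff_zero_smul_mem_pow_idealOfVars (r : MvPolynomial σ A) {f : MvPolynomial σ A}
    (hf : f ∈ idealOfVars σ A ^ k) : r * f - r.coeff 0 • f ∈ idealOfVars σ A ^ (k + 1) := by
  rw [smul_eq_C_mul, ← sub_mul, pow_succ']
  exact Ideal.mul_mem_mul (sub_C_coeff_zero_mem_idealOfVars r) hf

theorem homogeneousComponent_mul_of_mem_pow_idealOfVars (r : MvPolynomial σ A)
    {f : MvPolynomial σ A} (hf : f ∈ idealOfVars σ A ^ k) :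
    homogeneousComponent k (r * f) = r.coeff 0 • homogeneousComponent k f := by
  rw [← sub_eq_zero, ← map_smul, ← map_sub]
  exact homogeneousComponent_eq_zero_of_mem_pow_idealOfVars
    (mul_sub_coeff_zero_smul_mem_pow_idealOfVars r hf) k.lt_succ_self

end CommRing

section Syzygies

variable [CommSemiring A] {k : ℕ} {q : (σ →₀ ℕ) → MvPolynomial σ A}

theorem exists_eq_add_single_of_degree_eq_succ {a : σ →₀ ℕ} {s : ℕ} (ha : a.degree = s + 1) :
    ∃ b i, a = b + Finsupp.single i 1 ∧ b.degree = s := by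
  have ha0 : a ≠ 0 := by
    rintro rfl
    simp at ha
  obtain ⟨i, hi⟩ := DFunLike.ne_iff.1 ha0
  have hsub := Finsupp.sub_add_single_one_cancel hi
  refine ⟨a - Finsupp.single i 1, i, hsub.symm, ?_⟩
  have hdeg := congrArg Finsupp.degree hsub
  rw [map_add, Finsupp.degree_single] at hdeg
  omega

theorem monomial_mul_comm_of_X_mul_comm
    (hq : ∀ g : σ →₀ ℕ, g.degree + 1 = k → ∀ i j,
      X i * q (g + Finsupp.single j 1) = X j * q (g + Finsupp.single i 1))
    (s : ℕ) (c a b : σ →₀ ℕ) (hc : c.degree + s = k) (ha : a.degree = s) (hb : b.degree = s) :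
    monomial b 1 * q (c + a) = monomial a 1 * q (c + b) := by
  induction s generalizing c a b with
  | zero => rw [(Finsupp.degree_eq_zero_iff a).1 ha, (Finsupp.degree_eq_zero_iff b).1 hb]
  | succ s ih =>
    obtain ⟨a, i, rfl, has⟩ := exists_eq_add_single_of_degree_eq_succ ha
    obtain ⟨b, j, rfl, hbs⟩ := exists_eq_add_single_of_degree_eq_succ hb
    have hswap := hq (c + b) (by rw [map_add]; omega) i j
    have hih := ih (c + Finsupp.single i 1) a b (by simp; omega) has hbs
    calc monomial (b + Finsupp.single j 1) 1 * q (c + (a + Finsupp.single i 1))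
        = X j * (monomial b 1 * q (c + Finsupp.single i 1 + a)) := by
          rw [monomial_add_single, pow_one, ← add_assoc, add_right_comm]
          ring
      _ = monomial a 1 * (X j * q (c + b + Finsupp.single i 1)) := by
          rw [hih, add_right_comm c]
          ring
      _ = monomial (a + Finsupp.single i 1) 1 * q (c + (b + Finsupp.single j 1)) := by
          rw [← hswap, monomial_add_single, pow_one, add_assoc c]
          ring

theorem eq_zero_of_X_mul_comm [Nontrivial σ] {j : ℕ} (hjk : j < k)
    (hq : ∀ g : σ →₀ ℕ, g.degree + 1 = k → ∀ i j,
      X i * q (g + Finsupp.single j 1) = X j * q (g + Finsupp.single i 1))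
    (hdeg : ∀ a, a.degree = k → (q a).IsHomogeneous j) (a : σ →₀ ℕ) (ha : a.degree = k) :
    q a = 0 := by
  have hcomm : ∀ a b : σ →₀ ℕ, a.degree = k → b.degree = k →
      monomial b 1 * q a = monomial a 1 * q b := fun a b ha hb => by
    simpa using monomial_mul_comm_of_X_mul_comm hq k 0 a b (by simp) ha hb
  obtain ⟨i₀, i₁, hne⟩ := exists_pair_ne σ
  have hpow : q (Finsupp.single i₀ k) = 0 := by
    ext m
    by_contra hm
    have hmj : m.degree = j := by
      by_contra hmj
      exact hm ((hdeg _ (by simp)).coeff_eq_zero hmj)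
    have hcoeff := congrArg (coeff (Finsupp.single i₁ k + m))
      (hcomm (Finsupp.single i₀ k) (Finsupp.single i₁ k) (by simp) (by simp))
    rw [coeff_monomial_mul, one_mul, coeff_monomial_mul', if_neg] at hcoeff
    · exact hm hcoeff
    · intro hle
      have hi₀ := hle i₀
      have := Finsupp.le_degree i₀ m
      simp [hne.symm] at hi₀
      omega
  ext m
  have hcoeff := congrArg (coeff (Finsupp.single i₀ k + m))
    (hcomm a (Finsupp.single i₀ k) ha (by simp))
  rwa [hpow, mul_zero, coeff_monomial_mul, one_mul] at hcoeff

end Syzygies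

end Polynomial

section LinearAlgebra

variable {𝕜 V W U : Type*}

theorem exists_linearMap_lift [Semiring 𝕜] [AddCommMonoid V] [AddCommMonoid W] [AddCommMonoid U]
    [Module 𝕜 V] [Module 𝕜 W] [Module 𝕜 U] [Module.Projective 𝕜 V] (p : W →ₗ[𝕜] U)
    (α : V →ₗ[𝕜] U) (h : ∀ v, α v ∈ LinearMap.range p) : ∃ ψ : V →ₗ[𝕜] W, ∀ v, p (ψ v) = α v := by
  obtain ⟨ψ, hψ⟩ := Module.projective_lifting_property p.rangeRestrict
    (α.codRestrict (LinearMap.range p) h) p.surjective_rangeRestrict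
  exact ⟨ψ, fun v => congrArg Subtype.val (LinearMap.congr_fun hψ v)⟩

theorem nonempty_linearEquiv_prod_of_exact [DivisionRing 𝕜] [AddCommMonoid V] [AddCommMonoid W]
    [AddCommMonoid U] [Module 𝕜 V] [Module 𝕜 W] [Module 𝕜 U] {f : U →ₗ[𝕜] V} {g : V →ₗ[𝕜] W}
    (hf : Function.Injective f) (hfg : Function.Exact f g) (hg : Function.Surjective g) :
    Nonempty (V ≃ₗ[𝕜] W × U) := by
  let := Module.addCommMonoidToAddCommGroup 𝕜 (M := V)
  let := Module.addCommMonoidToAddCommGroup 𝕜 (M := W)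
  let := Module.addCommMonoidToAddCommGroup 𝕜 (M := U)
  obtain ⟨l, hl⟩ := Module.projective_lifting_property g LinearMap.id hg
  exact ⟨(hfg.splitSurjectiveEquiv hf ⟨l, hl⟩).1.trans (LinearEquiv.prodComm 𝕜 U W)⟩

variable [AddCommGroup V] [AddCommGroup W] [AddCommGroup U]

theorem exists_linearMap_lift_extending [DivisionRing 𝕜] [Module 𝕜 V] [Module 𝕜 W] [Module 𝕜 U]
    (p : W →ₗ[𝕜] U) (α : V →ₗ[𝕜] W) {S : Submodule 𝕜 V} (β : S →ₗ[𝕜] W)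
    (h : ∀ s : S, p (β s) = p (α s)) :
    ∃ ψ : V →ₗ[𝕜] W, (∀ v, p (ψ v) = p (α v)) ∧ ∀ s : S, ψ s = β s := by
  obtain ⟨γ, hγ⟩ := ((β - α ∘ₗ S.subtype).codRestrict (LinearMap.ker p)
    fun s => by simp [h]).exists_extend
  refine ⟨α + (LinearMap.ker p).subtype ∘ₗ γ, fun v => by simp, fun s => ?_⟩
  have hγs : (γ s : W) = β s - α s := congrArg Subtype.val (LinearMap.congr_fun hγ s)
  simp [hγs]

section InflationHom

variable [CommRing 𝕜] [Module 𝕜 V] [Module 𝕜 W] {S : Submodule 𝕜 V} {T T' : Submodule 𝕜 W}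

/-- The natural map `Hom(V/S, T) → Hom(V, T')` for submodules `T ≤ T'`, given by composition with
`V → V/S` and `T → T'`. -/
def inflationHom (S : Submodule 𝕜 V) (hT : T ≤ T') : (V ⧸ S →ₗ[𝕜] T) →ₗ[𝕜] V →ₗ[𝕜] T' where
  toFun h := Submodule.inclusion hT ∘ₗ h ∘ₗ S.mkQ
  map_add' _ _ := rfl
  map_smul' _ _ := rfl

theorem inflationHom_injective (hT : T ≤ T') : Function.Injective (inflationHom S hT) := by
  intro h h' heq
  exact Submodule.linearMap_qext S (LinearMap.ext fun v =>
    Submodule.inclusion_injective hT (LinearMap.congr_fun heq v))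

theorem mem_range_inflationHom_iff (hT : T ≤ T') {ψ : V →ₗ[𝕜] T'} :
    ψ ∈ LinearMap.range (inflationHom S hT) ↔ (∀ v, (ψ v : W) ∈ T) ∧ ∀ v ∈ S, ψ v = 0 := by
  constructor
  · rintro ⟨h, rfl⟩
    refine ⟨fun v => (h (S.mkQ v)).2, fun v hv => ?_⟩
    change Submodule.inclusion hT (h (S.mkQ v)) = 0
    rw [Submodule.mkQ_apply, (Submodule.Quotient.mk_eq_zero S).2 hv, map_zero, map_zero]
  · rintro ⟨hψT, hψS⟩
    exact ⟨S.liftQ ((T'.subtype ∘ₗ ψ).codRestrict T hψT)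
      fun v hv => Subtype.ext (congrArg (fun w : T' => (w : W)) (hψS v hv)), rfl⟩

end InflationHom

end LinearAlgebra

section Graded

variable {n k : ℕ} {I p q : Ideal (R n)}

theorem mem_mId_pow_of_mem_Rdeg {e : ℕ} {f : R n} (hf : f ∈ Rdeg n e) (hke : k ≤ e) :
    f ∈ mId n ^ k :=
  mem_pow_idealOfVars_of_isHomogeneous hf hke

theorem monomial_mem_mId_pow {a : Fin n →₀ ℕ} (ha : a.degree = k) :
    monomial a (1 : ℂ) ∈ mId n ^ k :=
  mem_mId_pow_of_mem_Rdeg (isHomogeneous_monomial 1 ha) le_rfl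

theorem linearMap_ext_mId_pow {M : Type*} [AddCommMonoid M] [Module (R n) M]
    {φ ψ : ↥(mId n ^ k) →ₗ[R n] M} (h : ∀ a, ∀ ha : a.degree = k,
      φ ⟨monomial a 1, monomial_mem_mId_pow ha⟩ = ψ ⟨monomial a 1, monomial_mem_mId_pow ha⟩) :
    φ = ψ :=
  linearMap_ext_pow_idealOfVars h

theorem proj_mk (hpq : p ≤ q) (f : R n) :
    proj p q (Ideal.Quotient.mk p f) = Ideal.Quotient.mk q f := by
  rw [proj, dif_pos hpq]
  rfl

theorem proj_proj {r : Ideal (R n)} (hpq : p ≤ q) (hqr : q ≤ r) (y : R n ⧸ p) :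
    proj q r (proj p q y) = proj p r y := by
  obtain ⟨f, rfl⟩ := Ideal.Quotient.mk_surjective y
  rw [proj_mk hpq, proj_mk hqr, proj_mk (hpq.trans hqr)]

section gradedImage

variable {e : ℕ} {d : ℤ}

theorem mem_gradedImage_iff {j : ℕ} (hj : (e : ℤ) + d = j) {y : R n ⧸ I} :
    y ∈ gradedImage I e d ↔ ∃ g ∈ Rdeg n j, Ideal.Quotient.mk I g = y := by
  rw [gradedImage, dif_pos (by omega), hj]
  rfl

theorem gradedImage_eq_bot_of_neg (h : (e : ℤ) + d < 0) : gradedImage I e d = ⊥ :=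
  dif_neg (by omega)

theorem gradedImage_eq_bot_of_le (hI : mId n ^ k ≤ I) (h : (k : ℤ) ≤ e + d) :
    gradedImage I e d = ⊥ := by
  obtain ⟨j, hj⟩ := Int.eq_ofNat_of_zero_le ((Int.natCast_nonneg k).trans h)
  refine (Submodule.eq_bot_iff _).2 fun y hy => ?_
  obtain ⟨g, hg, rfl⟩ := (mem_gradedImage_iff hj).1 hy
  exact Ideal.Quotient.eq_zero_iff_mem.2 (hI (mem_mId_pow_of_mem_Rdeg hg (by omega)))

theorem proj_mem_gradedImage (hpq : p ≤ q) {y : R n ⧸ p} (hy : y ∈ gradedImage p e d) :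
    proj p q y ∈ gradedImage q e d := by
  rcases lt_or_ge ((e : ℤ) + d) 0 with hneg | hnonneg
  · rw [gradedImage_eq_bot_of_neg hneg, Submodule.mem_bot] at hy
    simp [hy]
  · obtain ⟨j, hj⟩ := Int.eq_ofNat_of_zero_le hnonneg
    obtain ⟨g, hg, rfl⟩ := (mem_gradedImage_iff hj).1 hy
    exact (mem_gradedImage_iff hj).2 ⟨g, hg, (proj_mk hpq g).symm⟩

end gradedImage

section gradedHom

variable {d : ℤ}

theorem gradedHom.zero : gradedHom I d 0 := fun _ _ _ _ => Submodule.zero_mem _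

theorem gradedHom.apply_eq_zero_of_le {φ : I →ₗ[R n] R n ⧸ I} (hφ : gradedHom I d φ)
    (hI : mId n ^ k ≤ I) {e : ℕ} {f : R n} (hf : f ∈ I) (hfe : f ∈ Rdeg n e)
    (h : (k : ℤ) ≤ e + d) : φ ⟨f, hf⟩ = 0 := by
  have hmem := hφ e f hf hfe
  rwa [gradedImage_eq_bot_of_le hI h] at hmem

theorem gradedHom.exists_lift {φ : I →ₗ[R n] R n ⧸ I} (hφ : gradedHom I d φ) {j : ℕ}
    (hj : (k : ℤ) + d = j) {V : Type*} [AddCommMonoid V] [Module ℂ V] (u : V →ₗ[ℂ] R n)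
    (huI : ∀ v, u v ∈ I) (huk : ∀ v, u v ∈ Rdeg n k) :
    ∃ ψ : V →ₗ[ℂ] Rdeg n j, ∀ v, Ideal.Quotient.mk I (ψ v) = φ ⟨u v, huI v⟩ := by
  let := Module.addCommMonoidToAddCommGroup ℂ (M := V)
  refine exists_linearMap_lift ((Ideal.Quotient.mkₐ ℂ I).toLinearMap ∘ₗ (Rdeg n j).subtype)
    (φ.restrictScalars ℂ ∘ₗ u.codRestrict (I.restrictScalars ℂ) huI) fun v => ?_
  obtain ⟨g, hg, hgφ⟩ := (mem_gradedImage_iff hj).1 (hφ k _ (huI v) (huk v))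
  exact ⟨⟨g, hg⟩, hgφ⟩

theorem gradedHom.eq_zero_of_nonneg {φ : ↥(mId n ^ k) →ₗ[R n] R n ⧸ mId n ^ k}
    (hφ : gradedHom (mId n ^ k) d φ) (hd : 0 ≤ d) : φ = 0 :=
  linearMap_ext_mId_pow fun _ ha =>
    hφ.apply_eq_zero_of_le le_rfl _ (isHomogeneous_monomial 1 ha) (by omega)

theorem gradedHom.exists_lift_monomial {φ : ↥(mId n ^ k) →ₗ[R n] R n ⧸ mId n ^ k}
    (hφ : gradedHom (mId n ^ k) d φ) {j : ℕ} (hj : (k : ℤ) + d = j) :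
    ∃ q : (Fin n →₀ ℕ) → R n, (∀ a, (q a).IsHomogeneous j) ∧ ∀ a, ∀ ha : a.degree = k,
      Ideal.Quotient.mk (mId n ^ k) (q a) = φ ⟨monomial a 1, monomial_mem_mId_pow ha⟩ := by
  obtain ⟨ψ, hψ⟩ := hφ.exists_lift hj (homogeneousComponent k)
    (fun f => mem_mId_pow_of_mem_Rdeg (homogeneousComponent_mem k f) le_rfl)
    (homogeneousComponent_mem k)
  refine ⟨fun a => ψ (monomial a 1), fun a => (ψ _).2, fun a ha => ?_⟩
  rw [hψ]
  congr 2
  exact homogeneousComponent_eq_self (isHomogeneous_monomial 1 ha)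

theorem X_mul_comm_of_mk_eq {φ : ↥(mId n ^ k) →ₗ[R n] R n ⧸ mId n ^ k}
    {q : (Fin n →₀ ℕ) → R n} {j : ℕ} (hjk : 1 + j < k) (hq : ∀ a, (q a).IsHomogeneous j)
    (hqφ : ∀ a, ∀ ha : a.degree = k,
      Ideal.Quotient.mk (mId n ^ k) (q a) = φ ⟨monomial a 1, monomial_mem_mId_pow ha⟩)
    (g : Fin n →₀ ℕ) (hg : g.degree + 1 = k) (i l : Fin n) :
    X i * q (g + Finsupp.single l 1) = X l * q (g + Finsupp.single i 1) := by
  have hdeg (i : Fin n) : (g + Finsupp.single i 1).degree = k := by simpa using hg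
  have hhom (i l : Fin n) : (X i * q (g + Finsupp.single l 1)).IsHomogeneous (1 + j) :=
    (isHomogeneous_X ℂ i).mul (hq _)
  have hmk (i l : Fin n) : Ideal.Quotient.mk (mId n ^ k) (X i * q (g + Finsupp.single l 1)) =
      φ ((X i : R n) • ⟨monomial _ 1, monomial_mem_mId_pow (hdeg l)⟩) := by
    rw [map_mul, hqφ _ (hdeg l), map_smul]
    rfl
  refine sub_eq_zero.1 (eq_zero_of_isHomogeneous_of_mem_pow_idealOfVars
    ((hhom i l).sub (hhom l i)) (Ideal.Quotient.eq.1 ?_) hjk)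
  refine (hmk i l).trans (Eq.trans (congrArg φ (Subtype.ext ?_)) (hmk l i).symm)
  simp only [Submodule.coe_smul, smul_eq_mul, monomial_add_single, pow_one]
  ring

theorem gradedHom.eq_zero_of_le_neg_two (hn : 2 ≤ n)
    {φ : ↥(mId n ^ k) →ₗ[R n] R n ⧸ mId n ^ k} (hφ : gradedHom (mId n ^ k) d φ) (hd : d ≤ -2) :
    φ = 0 := by
  have : Nontrivial (Fin n) := Fin.nontrivial_iff_two_le.2 hn
  refine linearMap_ext_mId_pow fun a ha => ?_
  rcases lt_or_ge ((k : ℤ) + d) 0 with hneg | hnonneg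
  · have hmem := hφ k _ (monomial_mem_mId_pow ha) (isHomogeneous_monomial 1 ha)
    rwa [gradedImage_eq_bot_of_neg hneg] at hmem
  · obtain ⟨j, hj⟩ := Int.eq_ofNat_of_zero_le hnonneg
    obtain ⟨q, hq, hqφ⟩ := hφ.exists_lift_monomial hj
    have hqa : q a = 0 := eq_zero_of_X_mul_comm (by omega)
      (X_mul_comm_of_mk_eq (by omega) hq hqφ) (fun b _ => hq b) a ha
    exact (hqφ a ha).symm.trans (by rw [hqa, map_zero, LinearMap.zero_apply])

end gradedHom

section Compatibility

variable {I1 I2 : Ideal (R n)} {d : ℤ}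

theorem mem_tripleTgr_iff_of_neg_one_le (hd : -1 ≤ d) (h1 : mId n ^ k ≤ I1)
    (h2 : I2 ≤ mId n ^ k) (hhom2 : ∀ f ∈ I2, ∀ e, homogeneousComponent e f ∈ I2)
    {φ : TanCar3 n I1 (mId n ^ k) I2} :
    φ ∈ tripleTgr I1 (mId n ^ k) I2 d ↔
      (gradedHom I1 d φ.1 ∧ gradedHom (mId n ^ k) d φ.2.1 ∧ gradedHom I2 d φ.2.2) ∧
      (∀ f, ∀ hf : f ∈ Rdeg n k, φ.1 ⟨f, h1 (mem_mId_pow_of_mem_Rdeg hf le_rfl)⟩ =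
        proj (mId n ^ k) I1 (φ.2.1 ⟨f, mem_mId_pow_of_mem_Rdeg hf le_rfl⟩)) ∧
      ∀ f ∈ Rdeg n k, ∀ hf2 : f ∈ I2,
        φ.2.1 ⟨f, h2 hf2⟩ = proj I2 (mId n ^ k) (φ.2.2 ⟨f, hf2⟩) := by
  refine ⟨fun ⟨⟨hc1, hc2⟩, hgr⟩ => ⟨hgr, fun f hf => hc1 f _ _, fun f _ hf2 => hc2 f _ hf2⟩,
    fun ⟨hgr, hc1, hc2⟩ => ⟨⟨fun f _ hfK => ?_, fun f _ hf2 => ?_⟩, hgr⟩⟩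
  · have hcomp : φ.1 ∘ₗ Submodule.inclusion h1 = proj (mId n ^ k) I1 ∘ₗ φ.2.1 :=
      linearMap_ext_mId_pow fun a ha => hc1 _ (isHomogeneous_monomial 1 ha)
    exact LinearMap.congr_fun hcomp ⟨f, hfK⟩
  · have hcomp : φ.2.1 ∘ₗ Submodule.inclusion h2 = proj I2 (mId n ^ k) ∘ₗ φ.2.2 := by
      refine linearMap_ext_of_isHomogeneous hhom2 fun e f hf hfe => ?_
      change φ.2.1 ⟨f, h2 hf⟩ = proj I2 (mId n ^ k) (φ.2.2 ⟨f, hf⟩)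
      rcases lt_trichotomy e k with hlt | rfl | hgt
      · obtain rfl := eq_zero_of_isHomogeneous_of_mem_pow_idealOfVars hfe (h2 hf) hlt
        change φ.2.1 0 = proj I2 (mId n ^ k) (φ.2.2 0)
        rw [map_zero, map_zero, map_zero]
      · exact hc2 f hfe hf
      · have hproj := proj_mem_gradedImage h2 (hgr.2.2 e f hf hfe)
        rw [gradedImage_eq_bot_of_le le_rfl (by omega), Submodule.mem_bot] at hproj
        rw [hproj, hgr.2.1.apply_eq_zero_of_le le_rfl _ hfe (by omega)]
    exact LinearMap.congr_fun hcomp ⟨f, hf2⟩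

end Compatibility

section Forget

variable {I1 K I2 : Ideal (R n)} {d : ℤ}

/-- The forgetful map `(φ₁, φ_K, φ₂) ↦ (φ₁, φ₂)` in degree `d`. -/
def forgetMiddle (h1 : K ≤ I1) (h2 : I2 ≤ K) (d : ℤ) :
    tripleTgr I1 K I2 d →ₗ[ℂ] pairTgr I1 I2 d where
  toFun φ := ⟨(φ.1.1, φ.1.2.2),
    fun f hf1 hf2 => by
      rw [φ.2.1.1 f hf1 (h2 hf2), φ.2.1.2 f (h2 hf2) hf2, proj_proj h2 h1],
    φ.2.2.1, φ.2.2.2.2⟩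
  map_add' _ _ := rfl
  map_smul' _ _ := rfl

theorem forgetMiddle_injective (h1 : K ≤ I1) (h2 : I2 ≤ K) (hK : ∀ φ, gradedHom K d φ → φ = 0) :
    Function.Injective (forgetMiddle h1 h2 d) := by
  intro φ ψ h
  have hpair : ((φ.1.1, φ.1.2.2) : TanCar2 n I1 I2) = (ψ.1.1, ψ.1.2.2) := congrArg Subtype.val h
  obtain ⟨hfst, hsnd⟩ := Prod.mk.inj hpair
  exact Subtype.ext (Prod.ext hfst (Prod.ext
    ((hK _ φ.2.2.2.1).trans (hK _ ψ.2.2.2.1).symm) hsnd))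

theorem forgetMiddle_bijective_of_nonneg (hd : 0 ≤ d) (h1 : mId n ^ k ≤ I1) (h2 : I2 ≤ mId n ^ k)
    (hhom2 : ∀ f ∈ I2, ∀ e, homogeneousComponent e f ∈ I2) :
    Function.Bijective (forgetMiddle h1 h2 d) := by
  refine ⟨forgetMiddle_injective h1 h2 fun φ hφ => hφ.eq_zero_of_nonneg hd, ?_⟩
  rintro ⟨⟨φ₁, φ₂⟩, hcompat, hφ₁, hφ₂⟩
  refine ⟨⟨(φ₁, 0, φ₂), (mem_tripleTgr_iff_of_neg_one_le (by omega) h1 h2 hhom2).2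
    ⟨⟨hφ₁, gradedHom.zero, hφ₂⟩, fun f hf => ?_, fun f hf hf2 => ?_⟩⟩, rfl⟩
  · exact (hφ₁.apply_eq_zero_of_le h1 _ hf (by omega)).trans (map_zero _).symm
  · have hproj := proj_mem_gradedImage h2 (hφ₂ k f hf2 hf)
    rw [gradedImage_eq_bot_of_le le_rfl (by omega), Submodule.mem_bot] at hproj
    exact hproj.symm

theorem tripleTgr_eq_bot_of_pairTgr_eq_bot (h1 : K ≤ I1) (h2 : I2 ≤ K)
    (hK : ∀ φ, gradedHom K d φ → φ = 0) (hpair : pairTgr I1 I2 d = ⊥) :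
    tripleTgr I1 K I2 d = ⊥ := by
  have : Subsingleton (pairTgr I1 I2 d) := (Submodule.subsingleton_iff_eq_bot).2 hpair
  exact Submodule.subsingleton_iff_eq_bot.1 (forgetMiddle_injective h1 h2 hK).subsingleton

end Forget

end Graded

section DegreeNegOne

variable {n j : ℕ}

/-- The projection of `R n` onto its homogeneous part `R_k`. -/
def toRdeg (n k : ℕ) : R n →ₗ[ℂ] Rdeg n k :=
  (homogeneousComponent k).codRestrict (Rdeg n k) (homogeneousComponent_mem k)

theorem toRdeg_of_mem {k : ℕ} {f : R n} (hf : f ∈ Rdeg n k) : toRdeg n k f = ⟨f, hf⟩ :=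
  Subtype.ext (homogeneousComponent_eq_self hf)

theorem toRdeg_mul {k : ℕ} (r : R n) {f : R n} (hf : f ∈ mId n ^ k) :
    toRdeg n k (r * f) = r.coeff 0 • toRdeg n k f :=
  Subtype.ext (homogeneousComponent_mul_of_mem_pow_idealOfVars r hf)

/-- The homomorphism `m^{j+1} → R/m^{j+1}` of degree `-1` with prescribed values
`ψ : R_{j+1} → R_j` on the generators; it sends `f` to the class of `ψ` of the degree `j + 1`
component of `f`. -/
def homOfRdeg : (Rdeg n (j + 1) →ₗ[ℂ] Rdeg n j) →ₗ[ℂ]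
    (↥(mId n ^ (j + 1)) →ₗ[R n] R n ⧸ mId n ^ (j + 1)) where
  toFun ψ :=
    { toFun := fun f => Ideal.Quotient.mk (mId n ^ (j + 1)) (ψ (toRdeg n (j + 1) f))
      map_add' := fun f g => by simp
      map_smul' := fun r f => by
        have hψ : (ψ (toRdeg n (j + 1) f) : R n) ∈ mId n ^ j :=
          mem_mId_pow_of_mem_Rdeg (ψ _).2 le_rfl
        rw [Submodule.coe_smul, smul_eq_mul, toRdeg_mul r f.2, map_smul, Submodule.coe_smul]
        exact (Ideal.Quotient.eq.2 (mul_sub_coeff_zero_smul_mem_pow_idealOfVars r hψ)).symm }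
  map_add' ψ _ := LinearMap.ext fun f =>
    map_add (Ideal.Quotient.mk (mId n ^ (j + 1))) (ψ (toRdeg n (j + 1) f) : R n) _
  map_smul' c ψ := LinearMap.ext fun f => map_smul (Ideal.Quotient.mkₐ ℂ (mId n ^ (j + 1))) c _

variable {ψ : Rdeg n (j + 1) →ₗ[ℂ] Rdeg n j}

theorem homOfRdeg_apply_of_mem {f : R n} (hf : f ∈ Rdeg n (j + 1)) :
    homOfRdeg ψ ⟨f, mem_mId_pow_of_mem_Rdeg hf le_rfl⟩ =
      Ideal.Quotient.mk (mId n ^ (j + 1)) (ψ ⟨f, hf⟩) := by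
  rw [← toRdeg_of_mem hf]
  rfl

theorem gradedHom_homOfRdeg (ψ : Rdeg n (j + 1) →ₗ[ℂ] Rdeg n j) :
    gradedHom (mId n ^ (j + 1)) (-1) (homOfRdeg ψ) := by
  intro e f hf hfe
  by_cases he : e = j + 1
  · exact (mem_gradedImage_iff (by omega)).2 ⟨ψ (toRdeg n (j + 1) f), (ψ _).2, rfl⟩
  · have h0 : toRdeg n (j + 1) f = 0 := Subtype.ext
      ((homogeneousComponent_of_mem hfe).trans (if_neg (Ne.symm he)))
    have hf0 : homOfRdeg ψ ⟨f, hf⟩ = 0 := by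
      change Ideal.Quotient.mk (mId n ^ (j + 1)) (ψ (toRdeg n (j + 1) f)) = 0
      rw [h0, map_zero, Submodule.coe_zero, map_zero]
    rw [hf0]
    exact Submodule.zero_mem _

theorem mk_eq_zero_iff_of_mem_Rdeg {g : R n} (hg : g ∈ Rdeg n j) :
    Ideal.Quotient.mk (mId n ^ (j + 1)) g = 0 ↔ g = 0 := by
  refine ⟨fun h => ?_, fun h => by rw [h, map_zero]⟩
  exact eq_zero_of_isHomogeneous_of_mem_pow_idealOfVars hg
    (Ideal.Quotient.eq_zero_iff_mem.1 h) j.lt_succ_self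

theorem homOfRdeg_injective : Function.Injective (homOfRdeg (n := n) (j := j)) := by
  refine (injective_iff_map_eq_zero _).2 fun ψ hψ => LinearMap.ext fun f => Subtype.ext ?_
  refine (mk_eq_zero_iff_of_mem_Rdeg (ψ f).2).1 ?_
  rw [← homOfRdeg_apply_of_mem f.2, hψ]
  rfl

theorem gradedHom.exists_homOfRdeg_eq {φ : ↥(mId n ^ (j + 1)) →ₗ[R n] R n ⧸ mId n ^ (j + 1)}
    (hφ : gradedHom (mId n ^ (j + 1)) (-1) φ) : ∃ ψ, homOfRdeg ψ = φ := by
  obtain ⟨ψ, hψ⟩ := hφ.exists_lift (by omega : ((j + 1 : ℕ) : ℤ) + -1 = j)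
    (Rdeg n (j + 1)).subtype (fun f => mem_mId_pow_of_mem_Rdeg f.2 le_rfl) fun f => f.2
  exact ⟨ψ, linearMap_ext_mId_pow fun a ha =>
    (homOfRdeg_apply_of_mem (isHomogeneous_monomial 1 ha)).trans (hψ _)⟩

variable {I1 I2 : Ideal (R n)}

/-- The subspace `I ∩ R_k` of `R_k`. -/
abbrev degreePart (I : Ideal (R n)) (k : ℕ) : Submodule ℂ (Rdeg n k) :=
  Submodule.comap (Rdeg n k).subtype (I.restrictScalars ℂ)

theorem mk_homOfRdeg_mem_tripleTgr_iff (h1 : mId n ^ (j + 1) ≤ I1) (h2 : I2 ≤ mId n ^ (j + 1))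
    (hhom2 : ∀ f ∈ I2, ∀ e, homogeneousComponent e f ∈ I2)
    {φ₁ : I1 →ₗ[R n] R n ⧸ I1} {φ₂ : I2 →ₗ[R n] R n ⧸ I2}
    (hφ₁ : gradedHom I1 (-1) φ₁) (hφ₂ : gradedHom I2 (-1) φ₂) :
    ((φ₁, homOfRdeg ψ, φ₂) : TanCar3 n I1 (mId n ^ (j + 1)) I2) ∈
        tripleTgr I1 (mId n ^ (j + 1)) I2 (-1) ↔
      (∀ f : Rdeg n (j + 1), Ideal.Quotient.mk I1 (ψ f) =
        φ₁ ⟨f, h1 (mem_mId_pow_of_mem_Rdeg f.2 le_rfl)⟩) ∧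
      ∀ f : Rdeg n (j + 1), ∀ hf2 : (f : R n) ∈ I2,
        Ideal.Quotient.mk (mId n ^ (j + 1)) (ψ f) =
          proj I2 (mId n ^ (j + 1)) (φ₂ ⟨f, hf2⟩) := by
  have hval (f : Rdeg n (j + 1)) (hf : (f : R n) ∈ mId n ^ (j + 1)) :
      homOfRdeg ψ ⟨f, hf⟩ = Ideal.Quotient.mk (mId n ^ (j + 1)) (ψ f) :=
    homOfRdeg_apply_of_mem f.2
  rw [mem_tripleTgr_iff_of_neg_one_le le_rfl h1 h2 hhom2]
  refine ⟨fun ⟨_, hc1, hc2⟩ => ⟨fun f => ?_, fun f hf2 => ?_⟩,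
    fun ⟨hc1, hc2⟩ => ⟨⟨hφ₁, gradedHom_homOfRdeg ψ, hφ₂⟩, fun f hf => ?_, fun f hf hf2 => ?_⟩⟩
  · rw [hc1 f f.2, hval, proj_mk h1]
  · rw [← hval f (h2 hf2), hc2 f f.2 hf2]
  · rw [hval ⟨f, hf⟩, proj_mk h1, hc1 ⟨f, hf⟩]
  · rw [hval ⟨f, hf⟩, hc2 ⟨f, hf⟩ hf2]

theorem forgetMiddle_surjective_of_neg_one (h1 : mId n ^ (j + 1) ≤ I1) (h2 : I2 ≤ mId n ^ (j + 1))
    (hhom2 : ∀ f ∈ I2, ∀ e, homogeneousComponent e f ∈ I2) :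
    Function.Surjective (forgetMiddle h1 h2 (-1)) := by
  rintro ⟨⟨φ₁, φ₂⟩, hcompat, hφ₁, hφ₂⟩
  have hdeg : ((j + 1 : ℕ) : ℤ) + -1 = j := by omega
  obtain ⟨α, hα⟩ := hφ₁.exists_lift hdeg (Rdeg n (j + 1)).subtype
    (fun f => h1 (mem_mId_pow_of_mem_Rdeg f.2 le_rfl)) fun f => f.2
  obtain ⟨β, hβ⟩ := hφ₂.exists_lift hdeg
    ((Rdeg n (j + 1)).subtype ∘ₗ (degreePart I2 (j + 1)).subtype)
    (fun f => f.2) fun f => f.1.2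
  obtain ⟨ψ, hψα, hψβ⟩ := exists_linearMap_lift_extending
    ((Ideal.Quotient.mkₐ ℂ I1).toLinearMap ∘ₗ (Rdeg n j).subtype) α β fun f => by
      change Ideal.Quotient.mk I1 (β f) = Ideal.Quotient.mk I1 (α f)
      rw [← proj_mk (h2.trans h1), hβ, hα]
      exact (hcompat _ _ _).symm
  refine ⟨⟨(φ₁, homOfRdeg ψ, φ₂), (mk_homOfRdeg_mem_tripleTgr_iff h1 h2 hhom2 hφ₁ hφ₂).2
    ⟨fun f => (hψα f).trans (hα f), fun f hf2 => ?_⟩⟩, rfl⟩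
  have hψf : ψ f = β ⟨f, hf2⟩ := hψβ ⟨f, hf2⟩
  rw [hψf, ← proj_mk h2, hβ]
  rfl

theorem zero_homOfRdeg_zero_mem_tripleTgr_iff (h1 : mId n ^ (j + 1) ≤ I1)
    (h2 : I2 ≤ mId n ^ (j + 1)) (hhom2 : ∀ f ∈ I2, ∀ e, homogeneousComponent e f ∈ I2) :
    ((0, homOfRdeg ψ, 0) : TanCar3 n I1 (mId n ^ (j + 1)) I2) ∈
        tripleTgr I1 (mId n ^ (j + 1)) I2 (-1) ↔
      ψ ∈ LinearMap.range (inflationHom (degreePart I2 (j + 1))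
        (inf_le_right : I1.restrictScalars ℂ ⊓ Rdeg n j ≤ Rdeg n j)) := by
  rw [mk_homOfRdeg_mem_tripleTgr_iff h1 h2 hhom2 gradedHom.zero gradedHom.zero,
    mem_range_inflationHom_iff]
  refine and_congr (forall_congr' fun f => ?_)
    (forall_congr' fun f => forall_congr' fun hf2 => ?_)
  · rw [LinearMap.zero_apply, Ideal.Quotient.eq_zero_iff_mem]
    exact (and_iff_left (ψ f).2).symm
  · rw [LinearMap.zero_apply, map_zero, mk_eq_zero_iff_of_mem_Rdeg (ψ f).2, Submodule.coe_eq_zero]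

/-- The map `Hom(R_{j+1}/(I₂ ∩ R_{j+1}), I₁ ∩ R_j) → T^{=-1}(I₁, m^{j+1}, I₂)` onto the kernel of
the forgetful map, placing a homomorphism in the middle coordinate. -/
def forgetMiddleKer (h1 : mId n ^ (j + 1) ≤ I1) (h2 : I2 ≤ mId n ^ (j + 1))
    (hhom2 : ∀ f ∈ I2, ∀ e, homogeneousComponent e f ∈ I2) :
    (Rdeg n (j + 1) ⧸ degreePart I2 (j + 1) →ₗ[ℂ] ↥(I1.restrictScalars ℂ ⊓ Rdeg n j)) →ₗ[ℂ]
      tripleTgr I1 (mId n ^ (j + 1)) I2 (-1) :=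
  (LinearMap.inr ℂ (I1 →ₗ[R n] R n ⧸ I1) _ ∘ₗ LinearMap.inl ℂ _ (I2 →ₗ[R n] R n ⧸ I2) ∘ₗ
    homOfRdeg ∘ₗ inflationHom (degreePart I2 (j + 1)) inf_le_right).codRestrict _
    fun h => (zero_homOfRdeg_zero_mem_tripleTgr_iff h1 h2 hhom2).2 ⟨h, rfl⟩

theorem forgetMiddleKer_injective (h1 : mId n ^ (j + 1) ≤ I1) (h2 : I2 ≤ mId n ^ (j + 1))
    (hhom2 : ∀ f ∈ I2, ∀ e, homogeneousComponent e f ∈ I2) :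
    Function.Injective (forgetMiddleKer h1 h2 hhom2) := fun _ _ heq =>
  inflationHom_injective inf_le_right
    (homOfRdeg_injective (congrArg (fun φ => φ.1.2.1) heq))

theorem exact_forgetMiddleKer_forgetMiddle (h1 : mId n ^ (j + 1) ≤ I1) (h2 : I2 ≤ mId n ^ (j + 1))
    (hhom2 : ∀ f ∈ I2, ∀ e, homogeneousComponent e f ∈ I2) :
    Function.Exact (forgetMiddleKer h1 h2 hhom2) (forgetMiddle h1 h2 (-1)) := by
  refine fun φ => ⟨fun hφ => ?_, ?_⟩
  · obtain ⟨⟨φ₁, φK, φ₂⟩, hmem⟩ := φ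
    have hpair : ((φ₁, φ₂) : TanCar2 n I1 I2) = 0 := congrArg Subtype.val hφ
    obtain ⟨rfl, rfl⟩ := Prod.mk_eq_zero.1 hpair
    obtain ⟨ψ, rfl⟩ := gradedHom.exists_homOfRdeg_eq hmem.2.2.1
    obtain ⟨h, rfl⟩ := (zero_homOfRdeg_zero_mem_tripleTgr_iff h1 h2 hhom2).1 hmem
    exact ⟨h, rfl⟩
  · rintro ⟨h, rfl⟩
    rfl

theorem nonempty_tripleTgr_neg_one_linearEquiv (h1 : mId n ^ (j + 1) ≤ I1)
    (h2 : I2 ≤ mId n ^ (j + 1)) (hhom2 : ∀ f ∈ I2, ∀ e, homogeneousComponent e f ∈ I2) :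
    Nonempty (tripleTgr I1 (mId n ^ (j + 1)) I2 (-1) ≃ₗ[ℂ] pairTgr I1 I2 (-1) ×
      (Rdeg n (j + 1) ⧸ degreePart I2 (j + 1) →ₗ[ℂ] ↥(I1.restrictScalars ℂ ⊓ Rdeg n j))) :=
  nonempty_linearEquiv_prod_of_exact (forgetMiddleKer_injective h1 h2 hhom2)
    (exact_forgetMiddleKer_forgetMiddle h1 h2 hhom2)
    (forgetMiddle_surjective_of_neg_one h1 h2 hhom2)

end DegreeNegOne

theorem graded_tangents_of_sandwich_general (n k : ℕ) (hn : 2 ≤ n) (hk : 1 ≤ k)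
    (I1 I2 : Ideal (R n)) (hI1K : mId n ^ k ≤ I1) (hKI2 : I2 ≤ mId n ^ k)
    (hhom2 : ∀ f ∈ I2, ∀ e : ℕ, homogeneousComponent e f ∈ I2) :
    (∀ d : ℤ, 0 ≤ d →
      ∃ e : ↥(tripleTgr I1 (mId n ^ k) I2 d) ≃ₗ[ℂ] ↥(pairTgr I1 I2 d),
        ∀ φ : ↥(tripleTgr I1 (mId n ^ k) I2 d),
          (e φ : TanCar2 n I1 I2) = ((φ : TanCar3 n I1 (mId n ^ k) I2).1,
            (φ : TanCar3 n I1 (mId n ^ k) I2).2.2)) ∧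
    (∀ d : ℤ, d ≤ -2 → pairTgr I1 I2 d = ⊥ → tripleTgr I1 (mId n ^ k) I2 d = ⊥) ∧
    Nonempty (↥(tripleTgr I1 (mId n ^ k) I2 (-1)) ≃ₗ[ℂ]
      ↥(pairTgr I1 I2 (-1)) ×
        ((↥(Rdeg n k) ⧸ degreePart I2 k) →ₗ[ℂ] ↥(I1.restrictScalars ℂ ⊓ Rdeg n (k - 1)))) := by
  obtain ⟨j, rfl⟩ := Nat.exists_eq_add_of_le' hk
  refine ⟨fun d hd => ?_, fun d hd hpair => ?_, ?_⟩
  · exact ⟨LinearEquiv.ofBijective (forgetMiddle hI1K hKI2 d)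
      (forgetMiddle_bijective_of_nonneg hd hI1K hKI2 hhom2), fun _ => rfl⟩
  · exact tripleTgr_eq_bot_of_pairTgr_eq_bot hI1K hKI2
      (fun φ hφ => hφ.eq_zero_of_le_neg_two hn hd) hpair
  · exact nonempty_tripleTgr_neg_one_linearEquiv hI1K hKI2 hhom2

/-- Let `n ≥ 2`, `k ≥ 1`, and let `I^{(1)} ⊇ m^k ⊇ I^{(2)}` be homogeneous
`m`-primary ideals contained in `m` with `T^{=d}(I^{(1)}, I^{(2)}) = 0` for all `d ≤ −2`.
Then: (i) for every `d ≥ 0` the forgetful map restricts to a ℂ-linear isomorphism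
`T^{=d}(I^{(1)}, m^k, I^{(2)}) ≅ T^{=d}(I^{(1)}, I^{(2)})`; (ii) `T^{=d}(I^{(1)}, m^k, I^{(2)}) = 0`
for every `d ≤ −2`; (iii) `T^{=−1}(I^{(1)}, m^k, I^{(2)}) ≅ T^{=−1}(I^{(1)}, I^{(2)}) ⊕
Hom_ℂ(R_k/(I^{(2)} ∩ R_k), I^{(1)} ∩ R_{k−1})`. -/
theorem graded_tangents_of_sandwich (n k : ℕ) (hn : 2 ≤ n) (hk : 1 ≤ k)
    (I1 I2 : Ideal (R n))
    (hI1K : mId n ^ k ≤ I1) (hKI2 : I2 ≤ mId n ^ k)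
    (hhom1 : ∀ f ∈ I1, ∀ e : ℕ, homogeneousComponent e f ∈ I1)
    (hhom2 : ∀ f ∈ I2, ∀ e : ℕ, homogeneousComponent e f ∈ I2)
    (hprim1 : ∃ N : ℕ, 1 ≤ N ∧ mId n ^ N ≤ I1)
    (hprim2 : ∃ N : ℕ, 1 ≤ N ∧ mId n ^ N ≤ I2)
    (hm1 : I1 ≤ mId n) (hm2 : I2 ≤ mId n)
    (hconc : ∀ d : ℤ, d ≤ -2 → pairTgr I1 I2 d = ⊥) :
    (∀ d : ℤ, 0 ≤ d →
      ∃ e : ↥(tripleTgr I1 (mId n ^ k) I2 d) ≃ₗ[ℂ] ↥(pairTgr I1 I2 d),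
        ∀ φ : ↥(tripleTgr I1 (mId n ^ k) I2 d),
          (e φ : TanCar2 n I1 I2) = ((φ : TanCar3 n I1 (mId n ^ k) I2).1,
            (φ : TanCar3 n I1 (mId n ^ k) I2).2.2)) ∧
    (∀ d : ℤ, d ≤ -2 → tripleTgr I1 (mId n ^ k) I2 d = ⊥) ∧
    Nonempty (↥(tripleTgr I1 (mId n ^ k) I2 (-1)) ≃ₗ[ℂ]
      ↥(pairTgr I1 I2 (-1)) ×
        ((↥(Rdeg n k) ⧸ Submodule.comap (Rdeg n k).subtype (I2.restrictScalars ℂ)) →ₗ[ℂ]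
          ↥(I1.restrictScalars ℂ ⊓ Rdeg n (k - 1)))) := by
  obtain ⟨hnonneg, hneg, hnegOne⟩ :=
    graded_tangents_of_sandwich_general n k hn hk I1 I2 hI1K hKI2 hhom2
  exact ⟨hnonneg, fun d hd => hneg d hd (hconc d hd), hnegOne⟩

end
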